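/- arXiv:1602.06817 — 2 statements merged into one kernel-verified Lean document; each statement's English description precedes it below -/
import Mathlib

section
/- Let G be a bull-free graph containing an induced 5-cycle C with vertices c1,...,c5 (edges c_i c_{i+1} mod 5), and suppose every vertex adjacent to all of C that has a neighbor with no neighbors on C exists (i.e., G contains an umbrella with cycle C). Let A' be the set of vertices complete to C having a neighbor in the set Z of vertices anticomplete to C, and let A'' be the set of vertices complete to C, not in A', having a non-neighbor in A'. Let H be the connected component of G \ (A' ∪ A'') containing the vertices of C. Then A' ∪ A'' is complete to V(H). -/
open SimpleGraph

variable {V : Type*}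

/-- The vertices `a b c d e` induce a bull in `G` (edges ab, bc, cd, be, ce). -/
def IsBull (G : SimpleGraph V) (a b c d e : V) : Prop :=
  a ≠ b ∧ a ≠ c ∧ a ≠ d ∧ a ≠ e ∧ b ≠ c ∧ b ≠ d ∧ b ≠ e ∧ c ≠ d ∧ c ≠ e ∧ d ≠ e ∧
  G.Adj a b ∧ G.Adj b c ∧ G.Adj c d ∧ G.Adj b e ∧ G.Adj c e ∧
  ¬ G.Adj a c ∧ ¬ G.Adj a d ∧ ¬ G.Adj a e ∧ ¬ G.Adj b d ∧ ¬ G.Adj d e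

/-- `G` contains no induced bull. -/
def BullFree (G : SimpleGraph V) : Prop := ∀ a b c d e : V, ¬ IsBull G a b c d e

/-- `G` contains no induced path on six vertices. -/
def P6Free (G : SimpleGraph V) : Prop :=
  ¬ ∃ p : Fin 6 → V, Function.Injective p ∧
      ∀ i j : Fin 6, G.Adj (p i) (p j) ↔ (i.val + 1 = j.val ∨ j.val + 1 = i.val)

/-- `c` lists the vertices of an induced 5-cycle in `G` (indices mod 5). -/
def IsInducedC5 (G : SimpleGraph V) (c : Fin 5 → V) : Prop :=
  Function.Injective c ∧ ∀ i j : Fin 5, G.Adj (c i) (c j) ↔ (j = i + 1 ∨ i = j + 1)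

/-- `S` is a homogeneous set in `G`. -/
def IsHomogeneous (G : SimpleGraph V) (S : Set V) : Prop :=
  ∀ v ∉ S, (∀ s ∈ S, G.Adj v s) ∨ (∀ s ∈ S, ¬ G.Adj v s)

/-- `S` is a proper homogeneous set: homogeneous, of size at least two, not all of `V`. -/
def IsProperHomogeneous (G : SimpleGraph V) (S : Set V) : Prop :=
  IsHomogeneous G S ∧ (∃ a ∈ S, ∃ b ∈ S, a ≠ b) ∧ S ≠ Set.univ

/-- A graph is prime if it has no proper homogeneous set. -/
def IsPrimeGraph (G : SimpleGraph V) : Prop := ¬ ∃ S : Set V, IsProperHomogeneous G S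

/-- Number of neighbors of `x` on the 5-cycle `c`. -/
def nbrCount (G : SimpleGraph V) [DecidableRel G.Adj] (c : Fin 5 → V) (x : V) : ℕ :=
  (Finset.univ.filter fun i : Fin 5 => G.Adj x (c i)).card

/-
Let `C` be the 5-cycle; every vertex is complete to `C`, anticomplete to `C`, or mixed on `C`. Bulls
show that `A' ∪ A''` is complete to the mixed vertices and to the vertices complete to `C` outside
`A' ∪ A''`, and that whenever a mixed vertex `x` has an anticomplete neighbor `z`, every vertex
complete to `C` is adjacent to both `x` and `z`.

The anticomplete vertices are handled by an invariant that spreads along walks avoiding `A' ∪ A''`: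
`v` is complete to `A' ∪ A''`, and so is every anticomplete neighbor of `v`. The second clause makes
the induction go through: on a walk `y, w, v` with `w` and `v` anticomplete, either `y` is adjacent
to `v`, and the clause for `y` applies, or a non-neighbor `b ∈ A' ∪ A''` of `v` and a non-neighbor
`q ∈ C` of `y` would form the bull `v, w, b, q, y`.
-/

section Bull

variable {G : SimpleGraph V} {a b c d e : V}

theorem IsBull.of_adj (hab : G.Adj a b) (hbc : G.Adj b c) (hcd : G.Adj c d) (hbe : G.Adj b e)
    (hce : G.Adj c e) (hac : ¬ G.Adj a c) (had : ¬ G.Adj a d) (hae : ¬ G.Adj a e)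
    (hbd : ¬ G.Adj b d) (hde : ¬ G.Adj d e) : IsBull G a b c d e := by
  have hac' : a ≠ c := by rintro rfl; exact had hcd
  have had' : a ≠ d := by rintro rfl; exact hbd hab.symm
  have hae' : a ≠ e := by rintro rfl; exact hac hce.symm
  have hbd' : b ≠ d := by rintro rfl; exact had hab
  have hde' : d ≠ e := by rintro rfl; exact hbd hbe
  exact ⟨hab.ne, hac', had', hae', hbc.ne, hbd', hbe.ne, hcd.ne, hce.ne, hde',
    hab, hbc, hcd, hbe, hce, hac, had, hae, hbd, hde⟩

end Bull

section Definitions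

variable (G : SimpleGraph V)

/-- The vertex `x` is complete to `T`. -/
def IsCompleteTo (x : V) (T : Set V) : Prop := ∀ ⦃t⦄, t ∈ T → G.Adj x t

/-- The vertex `x` is anticomplete to `T`. -/
def IsAnticompleteTo (x : V) (T : Set V) : Prop := ∀ ⦃t⦄, t ∈ T → ¬ G.Adj x t

/-- The vertex `x` is mixed on `T`: neither complete nor anticomplete to it. A member of `T` may be
mixed on `T`, as every vertex of an induced 5-cycle is on that cycle. -/
def IsMixedOn (x : V) (T : Set V) : Prop := ¬ IsCompleteTo G x T ∧ ¬ IsAnticompleteTo G x T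

/-- The set `A'` of the paper, for an arbitrary vertex set `C` in place of the 5-cycle: the vertices
complete to `C` with a neighbor anticomplete to `C`. -/
def umbrellaCenters (C : Set V) : Set V :=
  {a | IsCompleteTo G a C ∧ ∃ z, IsAnticompleteTo G z C ∧ G.Adj a z}

/-- The set `A''` of the paper, for an arbitrary vertex set `C`: the other vertices complete to `C`
that have a non-neighbor in `A'`. -/
def secondaryCenters (C : Set V) : Set V :=
  {b | IsCompleteTo G b C ∧ b ∉ umbrellaCenters G C ∧ ∃ a ∈ umbrellaCenters G C, ¬ G.Adj b a}

/-- The set `A' ∪ A''` of the paper, which cuts out the component `H`. -/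
def hubs (C : Set V) : Set V := umbrellaCenters G C ∪ secondaryCenters G C

/-- The invariant propagated along walks that avoid the hubs of `C`: the vertex and all its
neighbors anticomplete to `C` are complete to the hubs. -/
def IsPropagating (C : Set V) (v : V) : Prop :=
  IsCompleteTo G v (hubs G C) ∧
    ∀ z, IsAnticompleteTo G z C → G.Adj v z → IsCompleteTo G z (hubs G C)

end Definitions

section ArbitrarySet

variable {G : SimpleGraph V} {C : Set V} {b v w x y z : V}

theorem IsCompleteTo.notMem (hx : IsCompleteTo G x C) : x ∉ C :=
  fun h => G.irrefl (hx h)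

theorem isCompleteTo_of_mem_hubs (hb : b ∈ hubs G C) : IsCompleteTo G b C :=
  hb.elim And.left And.left

theorem not_adj_of_mem_secondaryCenters (hb : b ∈ secondaryCenters G C)
    (hz : IsAnticompleteTo G z C) : ¬ G.Adj b z :=
  fun hbz => hb.2.1 ⟨hb.1, z, hz, hbz⟩

theorem not_adj_of_notMem_hubs (hx : IsCompleteTo G x C) (hxH : x ∉ hubs G C)
    (hz : IsAnticompleteTo G z C) : ¬ G.Adj x z :=
  fun hxz => hxH (.inl ⟨hx, z, hz, hxz⟩)

theorem IsCompleteTo.umbrellaCenters_of_notMem_hubs (hx : IsCompleteTo G x C)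
    (hxH : x ∉ hubs G C) : IsCompleteTo G x (umbrellaCenters G C) := by
  intro a ha
  by_contra hxa
  exact hxH (.inr ⟨hx, fun h => hxH (.inl h), a, ha, hxa⟩)

theorem IsCompleteTo.hubs_of_notMem_hubs (hB : BullFree G) (hC : C.Nonempty)
    (hx : IsCompleteTo G x C) (hxH : x ∉ hubs G C) : IsCompleteTo G x (hubs G C) := by
  have hxA := hx.umbrellaCenters_of_notMem_hubs hxH
  rintro b (hb | hb)
  · exact hxA hb
  by_contra hxb
  obtain ⟨p, hp⟩ := hC
  have ⟨hbC, _, a, ha, hba⟩ := hb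
  have ⟨haC, z, hz, haz⟩ := ha
  have hzb : ¬ G.Adj z b := fun h => not_adj_of_mem_secondaryCenters hb hz h.symm
  have hzx : ¬ G.Adj z x := fun h => not_adj_of_notMem_hubs hx hxH hz h.symm
  exact hB z a p b x (.of_adj haz.symm (haC hp) (hbC hp).symm (hxA ha).symm (hx hp).symm
    (hz hp) hzb hzx (fun h => hba h.symm) (fun h => hxb h.symm))

theorem IsCompleteTo.isPropagating (hB : BullFree G) (hC : C.Nonempty)
    (hx : IsCompleteTo G x C) (hxH : x ∉ hubs G C) : IsPropagating G C x :=
  ⟨hx.hubs_of_notMem_hubs hB hC hxH,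
    fun _ hz hxz => (not_adj_of_notMem_hubs hx hxH hz hxz).elim⟩

theorem IsPropagating.anticomplete_of_adj (hB : BullFree G) (hy : IsPropagating G C y)
    (hyw : G.Adj y w) (hw : IsAnticompleteTo G w C) : IsPropagating G C w := by
  have hwH : IsCompleteTo G w (hubs G C) := hy.2 w hw hyw
  refine ⟨hwH, fun v hv hwv => ?_⟩
  by_cases hyv : G.Adj y v
  · exact hy.2 v hv hyv
  intro b hb
  by_contra hvb
  obtain ⟨q, hq, hyq⟩ : ∃ q ∈ C, ¬ G.Adj y q := by
    by_contra! hyC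
    exact not_adj_of_notMem_hubs hyC hy.1.notMem hw hyw
  exact hB v w b q y (.of_adj hwv.symm (hwH hb) (isCompleteTo_of_mem_hubs hb hq) hyw.symm
    (hy.1 hb).symm hvb (hv hq) (fun h => hyv h.symm) (hw hq) (fun h => hyq h.symm))

theorem secondaryCenters_range_eq {ι : Type*} (c : ι → V) :
    secondaryCenters G (Set.range c) = {b | b ∉ Set.range c ∧ (∀ i, G.Adj b (c i)) ∧
      b ∉ umbrellaCenters G (Set.range c) ∧
        ∃ a ∈ umbrellaCenters G (Set.range c), ¬ G.Adj b a} := by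
  ext b
  constructor
  · rintro ⟨hb, hbA, hex⟩
    exact ⟨hb.notMem, Set.forall_mem_range.1 hb, hbA, hex⟩
  · rintro ⟨-, hb, hbA, hex⟩
    exact ⟨Set.forall_mem_range.2 hb, hbA, hex⟩

end ArbitrarySet

theorem exists_and_not_add_one {n : ℕ} [NeZero n] {P : Fin n → Prop} (h : ∃ i, P i)
    (h' : ∃ j, ¬ P j) : ∃ k, P k ∧ ¬ P (k + 1) := by
  by_contra! hsucc
  obtain ⟨i, hi⟩ := h
  obtain ⟨j, hj⟩ := h'
  have hP (m : ℕ) : P (i + m • 1) := by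
    induction m with
    | zero => simpa only [zero_nsmul, add_zero] using hi
    | succ m ih => simpa only [succ_nsmul, add_assoc] using hsucc _ ih
  open Fin.NatCast in
  have hji : i + (j - i).val • 1 = j := by
    rw [nsmul_one, Fin.cast_val_eq_self, add_sub_cancel]
  exact hj (hji ▸ hP (j - i).val)

namespace IsInducedC5

open Set

variable {G : SimpleGraph V} {c : Fin 5 → V} {a b v w x z : V}

theorem rotate (hc : IsInducedC5 G c) (k : Fin 5) : IsInducedC5 G fun i => c (k + i) :=
  ⟨hc.1.comp (add_right_injective k), fun i j => by simp [hc.2, add_assoc]⟩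

theorem exists_relabeling (hc : IsInducedC5 G c) (hx : IsMixedOn G x (range c)) :
    ∃ d : Fin 5 → V, IsInducedC5 G d ∧ range d = range c ∧ G.Adj x (d 0) ∧ ¬ G.Adj x (d 1) := by
  obtain ⟨k, hk, hk'⟩ : ∃ k, G.Adj x (c k) ∧ ¬ G.Adj x (c (k + 1)) := by
    apply exists_and_not_add_one (P := fun k => G.Adj x (c k))
    · simpa [IsAnticompleteTo] using hx.2
    · simpa [IsCompleteTo] using hx.1
  exact ⟨fun i => c (k + i), hc.rotate k, (Equiv.addLeft k).surjective.range_comp c,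
    by simpa using hk, hk'⟩

theorem notMem_range_of_isAnticompleteTo (hc : IsInducedC5 G c)
    (hz : IsAnticompleteTo G z (range c)) : z ∉ range c := by
  rintro ⟨i, rfl⟩
  exact hz (mem_range_self (i + 1)) ((hc.2 i (i + 1)).2 (.inl rfl))

theorem isMixedOn_apply (hc : IsInducedC5 G c) (i : Fin 5) : IsMixedOn G (c i) (range c) :=
  ⟨fun h => h.notMem (mem_range_self i),
    fun h => hc.notMem_range_of_isAnticompleteTo h (mem_range_self i)⟩

theorem adj_mixed_of_adj_anticomplete (hc : IsInducedC5 G c) (hB : BullFree G)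
    (hx : IsMixedOn G x (range c)) (ha : IsCompleteTo G a (range c))
    (hz : IsAnticompleteTo G z (range c)) (hxz : G.Adj x z) : G.Adj a x := by
  by_contra hax
  obtain ⟨d, hd, hdc, hx0, hx1⟩ := hc.exists_relabeling hx
  simp only [← hdc, IsCompleteTo, IsAnticompleteTo, forall_mem_range] at ha hz
  have hd01 : G.Adj (d 0) (d 1) := (hd.2 0 1).2 (by decide)
  have hd04 : G.Adj (d 0) (d 4) := (hd.2 0 4).2 (by decide)
  have hd34 : G.Adj (d 3) (d 4) := (hd.2 3 4).2 (by decide)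
  have hd30 : ¬ G.Adj (d 3) (d 0) := mt (hd.2 3 0).1 (by decide)
  have hd31 : ¬ G.Adj (d 3) (d 1) := mt (hd.2 3 1).1 (by decide)
  have hd14 : ¬ G.Adj (d 1) (d 4) := mt (hd.2 1 4).1 (by decide)
  have hx3 : G.Adj x (d 3) := by
    by_contra hx3
    exact hB (d 3) a (d 0) x (d 1) (.of_adj (ha 3).symm (ha 0) hx0.symm (ha 1) hd01
      hd30 (fun h => hx3 h.symm) hd31 hax hx1)
  have hx4 : G.Adj x (d 4) := by
    by_contra hx4
    exact hB (d 1) a (d 3) x (d 4) (.of_adj (ha 1).symm (ha 3) hx3.symm (ha 4) hd34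
      (fun h => hd31 h.symm) (fun h => hx1 h.symm) hd14 hax hx4)
  exact hB z x (d 0) (d 1) (d 4) (.of_adj hxz.symm hx0 hd01 hx4 hd04 (hz 0) (hz 1) (hz 4) hx1 hd14)

theorem adj_anticomplete_of_adj_mixed (hc : IsInducedC5 G c) (hB : BullFree G)
    (hx : IsMixedOn G x (range c)) (ha : IsCompleteTo G a (range c))
    (hz : IsAnticompleteTo G z (range c)) (hxz : G.Adj x z) : G.Adj a z := by
  by_contra haz
  have hax : G.Adj a x := hc.adj_mixed_of_adj_anticomplete hB hx ha hz hxz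
  have hza : ¬ G.Adj z a := fun h => haz h.symm
  obtain ⟨d, hd, hdc, hx0, hx1⟩ := hc.exists_relabeling hx
  simp only [← hdc, IsCompleteTo, IsAnticompleteTo, forall_mem_range] at ha hz
  have hd30 : ¬ G.Adj (d 3) (d 0) := mt (hd.2 3 0).1 (by decide)
  have hd13 : ¬ G.Adj (d 1) (d 3) := mt (hd.2 1 3).1 (by decide)
  have hx3 : G.Adj x (d 3) := by
    by_contra hx3
    exact hB z x a (d 3) (d 0) (.of_adj hxz.symm hax.symm (ha 3) hx0 (ha 0)
      hza (hz 3) (hz 0) hx3 hd30)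
  exact hB z x a (d 1) (d 3) (.of_adj hxz.symm hax.symm (ha 1) hx3 (ha 3)
    hza (hz 1) (hz 3) hx1 hd13)

theorem adj_of_mem_umbrellaCenters (hc : IsInducedC5 G c) (hB : BullFree G)
    (hx : IsMixedOn G x (range c)) (ha : a ∈ umbrellaCenters G (range c)) : G.Adj a x := by
  obtain ⟨haC, z, hz, haz⟩ := ha
  by_contra hax
  have hzx : ¬ G.Adj z x :=
    fun h => hax (hc.adj_mixed_of_adj_anticomplete hB hx haC hz h.symm)
  obtain ⟨d, hd, hdc, hx0, hx1⟩ := hc.exists_relabeling hx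
  simp only [← hdc, IsCompleteTo, IsAnticompleteTo, forall_mem_range] at haC hz
  have hd01 : G.Adj (d 0) (d 1) := (hd.2 0 1).2 (by decide)
  exact hB z a (d 0) x (d 1) (.of_adj haz.symm (haC 0) hx0.symm (haC 1) hd01
    (hz 0) hzx (hz 1) hax hx1)

theorem adj_of_mem_secondaryCenters (hc : IsInducedC5 G c) (hB : BullFree G)
    (hx : IsMixedOn G x (range c)) (hb : b ∈ secondaryCenters G (range c)) : G.Adj b x := by
  have ⟨hbC, _, a, ha, hba⟩ := hb
  have ⟨haC, z, hz, haz⟩ := ha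
  by_contra hbx
  have hax : G.Adj a x := hc.adj_of_mem_umbrellaCenters hB hx ha
  have hzb : ¬ G.Adj z b := fun h => not_adj_of_mem_secondaryCenters hb hz h.symm
  have hzx : ¬ G.Adj z x :=
    fun h => hbx (hc.adj_mixed_of_adj_anticomplete hB hx hbC hz h.symm)
  obtain ⟨p, hp, hxp⟩ : ∃ p ∈ range c, G.Adj x p := by
    simpa only [IsAnticompleteTo, not_forall, not_not, exists_prop] using hx.2
  exact hB z a p b x (.of_adj haz.symm (haC hp) (hbC hp).symm hax hxp.symm
    (hz hp) hzb hzx (fun h => hba h.symm) hbx)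

theorem isPropagating_of_isMixedOn (hc : IsInducedC5 G c) (hB : BullFree G)
    (hx : IsMixedOn G x (range c)) : IsPropagating G (range c) x := by
  refine ⟨?_, fun z hz hxz b hb => ?_⟩
  · rintro b (hb | hb)
    · exact (hc.adj_of_mem_umbrellaCenters hB hx hb).symm
    · exact (hc.adj_of_mem_secondaryCenters hB hx hb).symm
  · exact (hc.adj_anticomplete_of_adj_mixed hB hx (isCompleteTo_of_mem_hubs hb) hz hxz).symm

theorem isPropagating_of_adj (hc : IsInducedC5 G c) (hB : BullFree G)
    (hv : IsPropagating G (range c) v) (hvw : G.Adj v w) (hw : w ∉ hubs G (range c)) :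
    IsPropagating G (range c) w := by
  by_cases hcompl : IsCompleteTo G w (range c)
  · exact hcompl.isPropagating hB (range_nonempty c) hw
  by_cases hanti : IsAnticompleteTo G w (range c)
  · exact hv.anticomplete_of_adj hB hvw hanti
  · exact hc.isPropagating_of_isMixedOn hB ⟨hcompl, hanti⟩

theorem isPropagating_of_walk (hc : IsInducedC5 G c) (hB : BullFree G)
    (hv : IsPropagating G (range c) v) (p : G.Walk v w)
    (hp : ∀ x ∈ p.support, x ∉ hubs G (range c)) : IsPropagating G (range c) w := by
  induction p with
  | nil => exact hv
  | cons hadj p ih =>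
    rw [Walk.support_cons, List.forall_mem_cons] at hp
    exact ih (hc.isPropagating_of_adj hB hv hadj (hp.2 _ p.start_mem_support)) hp.2

theorem umbrellaCenters_range_eq (hc : IsInducedC5 G c) :
    umbrellaCenters G (range c) = {a | a ∉ range c ∧ (∀ i, G.Adj a (c i)) ∧
      ∃ z, z ∉ range c ∧ (∀ i, ¬ G.Adj z (c i)) ∧ G.Adj a z} := by
  ext a
  constructor
  · rintro ⟨ha, z, hz, haz⟩
    exact ⟨ha.notMem, forall_mem_range.1 ha, z, hc.notMem_range_of_isAnticompleteTo hz,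
      fun i => hz (mem_range_self i), haz⟩
  · rintro ⟨-, ha, z, -, hz, haz⟩
    exact ⟨forall_mem_range.2 ha, z, forall_mem_range.2 hz, haz⟩

end IsInducedC5

theorem stmt18 (G : SimpleGraph V) (hB : BullFree G)
    (c : Fin 5 → V) (hc : IsInducedC5 G c)
    (u t : V) (hu : ∀ i : Fin 5, G.Adj u (c i))
    (hut : G.Adj u t) (ht : ∀ i : Fin 5, ¬ G.Adj t (c i)) :
    ∀ A' A'' VH : Set V,
      A' = {a : V | a ∉ Set.range c ∧ (∀ i : Fin 5, G.Adj a (c i)) ∧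
              ∃ z : V, z ∉ Set.range c ∧ (∀ i : Fin 5, ¬ G.Adj z (c i)) ∧ G.Adj a z} →
      A'' = {a : V | a ∉ Set.range c ∧ (∀ i : Fin 5, G.Adj a (c i)) ∧
              a ∉ A' ∧ ∃ a' ∈ A', ¬ G.Adj a a'} →
      VH = {v : V | ∃ p : G.Walk (c 0) v, ∀ w ∈ p.support, w ∉ A' ∪ A''} →
      ∀ b ∈ A' ∪ A'', ∀ v ∈ VH, G.Adj b v := by
  intro A' A'' VH hA' hA'' hVH b hb v hv
  rw [← hc.umbrellaCenters_range_eq] at hA'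
  rw [hA', ← secondaryCenters_range_eq] at hA''
  have hhubs : A' ∪ A'' = hubs G (Set.range c) := by rw [hA', hA'', hubs]
  rw [hhubs] at hb hVH
  rw [hVH] at hv
  obtain ⟨p, hp⟩ := hv
  have hc0 : IsPropagating G (Set.range c) (c 0) :=
    hc.isPropagating_of_isMixedOn hB (hc.isMixedOn_apply 0)
  exact ((hc.isPropagating_of_walk hB hc0 p hp).1 hb).symm
end

section
/- Let G be a prime (P6, bull)-free graph containing an induced G7 (an induced 5-cycle C on c1,...,c5 with edges c_i c_{i+1} mod 5, plus d adjacent exactly to c1, c4, x and x adjacent only to d). Then every vertex of G either lies on C, or has exactly four neighbors on C, or has exactly two neighbors on C, or has at most one neighbor on C. -/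
open SimpleGraph

variable {V : Type*}

/-!
If `A ≠ V` contains an edge `ab`, the component of `a` in `G[A]` is not homogeneous in the prime
graph `G`, so some vertex outside `A` is mixed on an edge of that component. This is used twice.

* `A` the set of vertices that are not centers of the 5-cycle. In a `G₇` the vertex `x` is an
  anticenter adjacent to every center. Bull-freeness then makes every vertex of the component of the
  cycle in `G[A]` adjacent to all centers, so there are no centers.
* `A` the set of clones of `c i`. Replacing `c i` by an adjacent clone yields another `G₇`, whose
  cycle has no center either, and this forces a vertex mixed on two adjacent clones to be a clone
  itself. So no clone of `c i` is adjacent to it.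

In a bull-free graph, three neighbors on a 5-cycle are consecutive, which makes the vertex a clone
adjacent to the vertex it copies. Five neighbors make it a center.
-/

variable {G : SimpleGraph V} {c : Fin 5 → V}

theorem BullFree.not_bull (hB : BullFree G) (a b c d e : V)
    (hab : G.Adj a b) (hbc : G.Adj b c) (hcd : G.Adj c d) (hbe : G.Adj b e) (hce : G.Adj c e)
    (hac : ¬ G.Adj a c) (had : ¬ G.Adj a d) (hae : ¬ G.Adj a e) (hbd : ¬ G.Adj b d)
    (hde : ¬ G.Adj d e) : False := by
  refine hB a b c d e ⟨hab.ne, ?_, ?_, ?_, hbc.ne, ?_, hbe.ne, hcd.ne, hce.ne, ?_,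
    hab, hbc, hcd, hbe, hce, hac, had, hae, hbd, hde⟩
  all_goals grind [G.adj_comm]

theorem IsInducedC5.adj_add_one (hc : IsInducedC5 G c) (i : Fin 5) : G.Adj (c i) (c (i + 1)) :=
  (hc.2 _ _).2 (.inl rfl)

theorem forall_fin_of_imp_add_one {n : ℕ} [NeZero n] {P : Fin n → Prop} {i : Fin n} (hi : P i)
    (h : ∀ j, P j → P (j + 1)) (j : Fin n) : P j := by
  have hk (k : ℕ) : P (i + Fin.ofNat n k) := by
    induction k with
    | zero => simpa using hi
    | succ k ih =>
      have hsucc : Fin.ofNat n (k + 1) = Fin.ofNat n k + 1 := Fin.ext (by simp [Fin.val_add])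
      exact hsucc ▸ add_assoc i (Fin.ofNat n k) 1 ▸ h _ ih
  simpa using hk (j - i).val

theorem forall_fin_five_iff (i : Fin 5) {P : Fin 5 → Prop} :
    (∀ j, P j) ↔ P i ∧ P (i + 1) ∧ P (i + 2) ∧ P (i + 3) ∧ P (i + 4) := by
  have hij (j : Fin 5) : j = i ∨ j = i + 1 ∨ j = i + 2 ∨ j = i + 3 ∨ j = i + 4 := by
    decide +revert
  refine ⟨fun h => ⟨h _, h _, h _, h _, h _⟩, fun ⟨h0, h1, h2, h3, h4⟩ j => ?_⟩
  rcases hij j with h | h | h | h | h <;> rwa [h]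

theorem isHomogeneous_setOf_reflTransGen {r : V → V → Prop} {a : V}
    (h : ∀ y, ¬ Relation.ReflTransGen r a y → ∀ s t, Relation.ReflTransGen r a s → r s t →
      (G.Adj y s ↔ G.Adj y t)) :
    IsHomogeneous G {t | Relation.ReflTransGen r a t} := by
  intro y hy
  have hya (t : V) (ht : Relation.ReflTransGen r a t) : G.Adj y a ↔ G.Adj y t := by
    induction ht with
    | refl => rfl
    | tail hs hst ih => exact ih.trans (h y hy _ _ hs hst)
  by_cases hadj : G.Adj y a
  · exact .inl fun t ht => (hya t ht).1 hadj
  · exact .inr fun t ht => (hya t ht).not.1 hadj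

theorem IsPrimeGraph.exists_distinguisher (hG : IsPrimeGraph G) {A : Set V} (hA : A ≠ Set.univ)
    {a b : V} (ha : a ∈ A) (hb : b ∈ A) (hab : G.Adj a b) {P : V → Prop} (hPa : P a)
    (hP : ∀ s ∈ A, ∀ t ∈ A, G.Adj s t → P s → P t) :
    ∃ s ∈ A, ∃ t ∈ A, ∃ y ∉ A, P s ∧ P t ∧ G.Adj s t ∧ G.Adj y t ∧ ¬ G.Adj y s := by
  by_contra! hno
  -- Vertices of `A` outside the component of `a` in `G[A]` have no neighbors in it.
  let r : V → V → Prop := fun s t => G.Adj s t ∧ t ∈ A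
  have hK (t : V) (ht : Relation.ReflTransGen r a t) : t ∈ A ∧ P t := by
    induction ht with
    | refl => exact ⟨ha, hPa⟩
    | tail _ hst ih => exact ⟨hst.2, hP _ ih.1 _ hst.2 hst.1 ih.2⟩
  refine hG ⟨{t | Relation.ReflTransGen r a t}, isHomogeneous_setOf_reflTransGen ?_,
    ⟨a, .refl, b, .single ⟨hab, hb⟩, hab.ne⟩, fun huniv => hA ?_⟩
  · intro y hy s t hs hst
    obtain ⟨hsA, hPs⟩ := hK s hs
    obtain ⟨htA, hPt⟩ := hK t (hs.tail hst)
    by_cases hyA : y ∈ A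
    · have hnot (u : V) (hu : Relation.ReflTransGen r a u) : ¬ G.Adj y u :=
        fun hyu => hy (hu.tail ⟨hyu.symm, hyA⟩)
      exact iff_of_false (hnot s hs) (hnot t (hs.tail hst))
    · exact ⟨hno t htA s hsA y hyA hPt hPs hst.1.symm, hno s hsA t htA y hyA hPs hPt hst.1⟩
  · exact Set.eq_univ_of_forall fun t => (hK t (huniv.symm ▸ Set.mem_univ t : t ∈ {t | _})).1

/-- `v` is a center of the cycle `c`: it is adjacent to every vertex of `c`. -/
def IsCenter (G : SimpleGraph V) (c : Fin 5 → V) (v : V) : Prop := ∀ i, G.Adj v (c i)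

/-- `v` is an anticenter of the cycle `c`: it is adjacent to no vertex of `c`. -/
def IsAnticenter (G : SimpleGraph V) (c : Fin 5 → V) (v : V) : Prop := ∀ i, ¬ G.Adj v (c i)

section Center

variable {a u w x y z : V}

theorem BullFree.adj_of_isCenter (hB : BullFree G) (hc : IsInducedC5 G c) (ha : IsCenter G c a)
    (hx : IsAnticenter G c x) (hax : G.Adj a x) (hu : ¬ IsCenter G c u)
    (hu' : ¬ IsAnticenter G c u) : G.Adj u a := by
  by_contra hua
  obtain ⟨j, hj⟩ : ∃ j, G.Adj u (c j) := by simpa [IsAnticenter] using hu'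
  obtain ⟨i, hi, hi'⟩ : ∃ i, G.Adj u (c i) ∧ ¬ G.Adj u (c (i + 1)) := by
    by_contra! h
    exact hu (forall_fin_of_imp_add_one hj h)
  have hfar (j : Fin 5) (hj : G.Adj u (c j)) (hj' : ¬ G.Adj u (c (j + 1))) {y : V}
      (hya : G.Adj y a) (hy : ¬ G.Adj y (c j)) (hy' : ¬ G.Adj y (c (j + 1))) : G.Adj u y := by
    have := hB.not_bull u (c j) a y (c (j + 1))
    grind [G.adj_comm, hc.2, ha j, ha (j + 1)]
  have hux : G.Adj u x := hfar i hi hi' hax.symm (hx _) (hx _)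
  have hstable (j : Fin 5) (hj : G.Adj u (c j)) : ¬ G.Adj u (c (j + 1)) := by
    intro hj'
    refine hu fun k => (forall_fin_of_imp_add_one (P := fun k => G.Adj u (c k) ∧
      G.Adj u (c (k + 1))) ⟨hj, hj'⟩ (fun k hk => ⟨hk.2, ?_⟩) k).1
    have := hB.not_bull x u (c (k + 1)) (c (k + 2)) (c k)
    grind [G.adj_comm, hc.2, IsAnticenter]
  have hi3 : G.Adj u (c (i + 3)) := by
    apply hfar i hi hi' (ha _).symm <;> grind [hc.2]
  have hi6 : G.Adj u (c (i + 6)) := by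
    apply hfar (i + 3) hi3 (hstable _ hi3) (ha _).symm <;> grind [hc.2]
  exact hi' hi6

theorem BullFree.isAnticenter_of_adj (hB : BullFree G) (hc : IsInducedC5 G c) (ha : IsCenter G c a)
    (hu : ¬ IsCenter G c u) (hz : IsAnticenter G c z) (hua : G.Adj u a) (huz : G.Adj u z)
    (hza : ¬ G.Adj z a) : IsAnticenter G c u := by
  by_contra hu'
  obtain ⟨j, hj⟩ : ∃ j, G.Adj u (c j) := by simpa [IsAnticenter] using hu'
  have hadd_two (i : Fin 5) (hi : G.Adj u (c i)) : G.Adj u (c (i + 2)) := by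
    have := hB.not_bull z u a (c (i + 2)) (c i)
    grind [G.adj_comm, hc.2, ha i, ha (i + 2), IsAnticenter]
  refine hu (forall_fin_of_imp_add_one hj fun i hi => ?_)
  convert hadd_two _ (hadd_two _ (hadd_two i hi)) using 2
  grind

theorem BullFree.isCenter_of_adj (hB : BullFree G) (ha : IsCenter G c a)
    (hy : IsAnticenter G c y) (hw : IsAnticenter G c w) (hyw : G.Adj y w) (hwz : G.Adj w z)
    (hwa : G.Adj w a) (hza : G.Adj z a) (hya : ¬ G.Adj y a) (hyz : ¬ G.Adj y z) :
    IsCenter G c z := by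
  intro i
  by_contra hzi
  exact hB.not_bull y w a (c i) z hyw hwa (ha i) hwz hza.symm hya (hy i) hyz (hw i)
    (fun h => hzi h.symm)

theorem not_isCenter_apply (i : Fin 5) : ¬ IsCenter G c (c i) :=
  fun h => G.irrefl (h i)

theorem IsInducedC5.not_isAnticenter (hc : IsInducedC5 G c) (i : Fin 5) :
    ¬ IsAnticenter G c (c i) :=
  fun h => h (i + 1) (hc.adj_add_one i)

/-- `w` is adjacent to all the centers of the cycle `c`. -/
def AdjCenters (G : SimpleGraph V) (c : Fin 5 → V) (w : V) : Prop :=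
  ∀ a, IsCenter G c a → G.Adj w a

theorem BullFree.adjCenters_of_adj (hB : BullFree G) (hc : IsInducedC5 G c)
    (hmixed : ∀ u, ¬ IsCenter G c u → ¬ IsAnticenter G c u → AdjCenters G c u)
    (hu : ¬ IsCenter G c u) (hu' : ¬ IsAnticenter G c u) (hy : ¬ IsCenter G c y)
    (huy : G.Adj u y) : AdjCenters G c y := by
  by_cases hy' : IsAnticenter G c y
  · intro a ha
    by_contra hya
    exact hu' (hB.isAnticenter_of_adj hc ha hu hy' (hmixed u hu hu' a ha) huy hya)
  · exact hmixed y hy hy'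

theorem BullFree.adjCenters_of_adj_adj (hB : BullFree G) (hc : IsInducedC5 G c)
    (hmixed : ∀ u, ¬ IsCenter G c u → ¬ IsAnticenter G c u → AdjCenters G c u)
    (hz : ¬ IsCenter G c z) (hAz : AdjCenters G c z)
    (hNz : ∀ y, ¬ IsCenter G c y → G.Adj z y → AdjCenters G c y)
    (hw : ¬ IsCenter G c w) (hzw : G.Adj z w) (hy : ¬ IsCenter G c y) (hwy : G.Adj w y) :
    AdjCenters G c y := by
  by_cases hw' : IsAnticenter G c w
  · by_cases hy' : IsAnticenter G c y
    · intro a ha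
      by_contra hya
      exact hz (hB.isCenter_of_adj ha hy' hw' hwy.symm hzw.symm (hNz w hw hzw a ha) (hAz a ha) hya
        fun hyz => hya (hNz y hy hyz.symm a ha))
    · exact hmixed y hy hy'
  · exact hB.adjCenters_of_adj hc hmixed hw hw' hy hwy

theorem IsPrimeGraph.not_isCenter (hG : IsPrimeGraph G) (hB : BullFree G) (hc : IsInducedC5 G c)
    (hx : IsAnticenter G c x) (hadj : ∀ a, IsCenter G c a → G.Adj a x) (v : V) :
    ¬ IsCenter G c v := by
  intro hv
  have hmixed (u : V) (hu : ¬ IsCenter G c u) (hu' : ¬ IsAnticenter G c u) : AdjCenters G c u :=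
    fun a ha => hB.adj_of_isCenter hc ha hx (hadj a ha) hu hu'
  obtain ⟨s, -, -, -, y, hy, hs, -, -, -, hys⟩ :=
    hG.exists_distinguisher (A := {w | ¬ IsCenter G c w})
      (P := fun w => AdjCenters G c w ∧ ∀ y, ¬ IsCenter G c y → G.Adj w y → AdjCenters G c y)
      ((Set.ne_univ_iff_exists_notMem _).2 ⟨v, not_not.2 hv⟩)
      (not_isCenter_apply 0) (not_isCenter_apply 1) (hc.adj_add_one 0)
      ⟨hmixed _ (not_isCenter_apply 0) (hc.not_isAnticenter 0), fun y hy =>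
        hB.adjCenters_of_adj hc hmixed (not_isCenter_apply 0) (hc.not_isAnticenter 0) hy⟩
      fun z hz w hw hzw hPz => ⟨hPz.2 w hw hzw, fun y hy =>
        hB.adjCenters_of_adj_adj hc hmixed hz hPz.1 hPz.2 hw hzw hy⟩
  exact hys (hs.1 y (not_not.1 hy)).symm

end Center

/-- `v` is a clone of the `i`-th vertex of the cycle `c`: it has the same neighbors as `c i` among
the other vertices of the cycle. It may or may not be adjacent to `c i`. -/
def IsClone (G : SimpleGraph V) (c : Fin 5 → V) (i : Fin 5) (v : V) : Prop :=
  ∀ j ≠ i, (G.Adj v (c j) ↔ G.Adj (c i) (c j))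

/-- The vertices of the cycle `c` together with `d` and `x` induce a `G₇` in `G`. -/
structure IsG7 (G : SimpleGraph V) (c : Fin 5 → V) (d x : V) : Prop where
  cycle : IsInducedC5 G c
  adj_zero : G.Adj d (c 0)
  adj_three : G.Adj d (c 3)
  not_adj : ∀ i, i ≠ 0 → i ≠ 3 → ¬ G.Adj d (c i)
  adj : G.Adj x d
  isAnticenter : IsAnticenter G c x

section Clone

variable {d t v x y : V} {i : Fin 5}

theorem IsInducedC5.isClone_iff (hc : IsInducedC5 G c) :
    IsClone G c i v ↔ G.Adj v (c (i + 1)) ∧ ¬ G.Adj v (c (i + 2)) ∧ ¬ G.Adj v (c (i + 3)) ∧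
      G.Adj v (c (i + 4)) := by
  rw [IsClone, forall_fin_five_iff i]
  grind [hc.2]

theorem IsClone.isClone_update_iff (hv : IsClone G c i v) :
    IsClone G (Function.update c i v) i t ↔ IsClone G c i t :=
  forall₂_congr fun j hj => by simp [hj, hv j hj]

theorem IsClone.isInducedC5_update (hv : IsClone G c i v) (hc : IsInducedC5 G c) :
    IsInducedC5 G (Function.update c i v) := by
  have hadj (j k : Fin 5) : G.Adj (Function.update c i v j) (Function.update c i v k) ↔
      (k = j + 1 ∨ j = k + 1) := by
    rw [← hc.2]
    by_cases hj : j = i <;> by_cases hk : k = i <;>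
      simp_all [IsClone, G.adj_comm _ v, G.adj_comm _ (c i)]
  refine ⟨fun j k hjk => ?_, hadj⟩
  have hnbr (l : Fin 5) : (l = j + 1 ∨ j = l + 1) ↔ (l = k + 1 ∨ k = l + 1) := by
    rw [← hadj, ← hadj, hjk]
  revert hnbr
  clear hjk
  decide +revert

theorem BullFree.not_adj_of_isClone (hB : BullFree G) (hc : IsInducedC5 G c)
    (hx : IsAnticenter G c x) (hv : IsClone G c i v) (hiv : G.Adj (c i) v) : ¬ G.Adj x v := by
  intro hxv
  have := hB.not_bull x v (c (i + 1)) (c (i + 2)) (c i)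
  grind [G.adj_comm, hc.2, IsAnticenter, IsClone]

theorem BullFree.isClone_or_of_distinguisher (hB : BullFree G) (hc : IsInducedC5 G c)
    (ht : IsClone G c i t) (hit : G.Adj (c i) t) (hyt : G.Adj y t) (hyi : ¬ G.Adj y (c i))
    (hy : ¬ IsCenter G (Function.update c i t) y) :
    IsClone G c i y ∨ (IsClone G c (i + 2) y ∧ G.Adj (c (i + 2)) y) ∨
      (IsClone G c (i + 3) y ∧ G.Adj (c (i + 3)) y) := by
  have h12 : G.Adj y (c (i + 1)) ∨ G.Adj y (c (i + 2)) := by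
    have := hB.not_bull y t (c (i + 1)) (c (i + 2)) (c i)
    grind [G.adj_comm, hc.2, IsClone]
  have h43 : G.Adj y (c (i + 4)) ∨ G.Adj y (c (i + 3)) := by
    have := hB.not_bull y t (c (i + 4)) (c (i + 3)) (c i)
    grind [G.adj_comm, hc.2, IsClone]
  have h124 : G.Adj y (c (i + 1)) → ¬ G.Adj y (c (i + 2)) → G.Adj y (c (i + 4)) := by
    have := hB.not_bull (c (i + 4)) t (c (i + 1)) (c (i + 2)) y
    grind [G.adj_comm, hc.2, IsClone]
  have h431 : G.Adj y (c (i + 4)) → ¬ G.Adj y (c (i + 3)) → G.Adj y (c (i + 1)) := by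
    have := hB.not_bull (c (i + 1)) t (c (i + 4)) (c (i + 3)) y
    grind [G.adj_comm, hc.2, IsClone]
  have h123 : G.Adj y (c (i + 1)) → G.Adj y (c (i + 2)) → G.Adj y (c (i + 3)) := by
    have := hB.not_bull (c i) (c (i + 1)) (c (i + 2)) (c (i + 3)) y
    grind [G.adj_comm, hc.2]
  have h432 : G.Adj y (c (i + 4)) → G.Adj y (c (i + 3)) → G.Adj y (c (i + 2)) := by
    have := hB.not_bull (c i) (c (i + 4)) (c (i + 3)) (c (i + 2)) y
    grind [G.adj_comm, hc.2]
  have h2314 : G.Adj y (c (i + 2)) → G.Adj y (c (i + 3)) →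
      G.Adj y (c (i + 1)) ∨ G.Adj y (c (i + 4)) := by
    have := hB.not_bull (c (i + 1)) (c (i + 2)) (c (i + 3)) (c (i + 4)) y
    grind [G.adj_comm, hc.2]
  have hi : ¬ (G.Adj y (c (i + 1)) ∧ G.Adj y (c (i + 2)) ∧ G.Adj y (c (i + 3)) ∧
      G.Adj y (c (i + 4))) := by
    simpa [IsCenter, forall_fin_five_iff i, hyt] using hy
  simp only [hc.isClone_iff, G.adj_comm _ y, add_assoc, Fin.reduceAdd, add_zero]
  grind

namespace IsG7

theorem adj_of_isCenter (h : IsG7 G c d x) (hB : BullFree G) (hv : IsCenter G c v) :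
    G.Adj v x := by
  obtain ⟨hc, hd0, hd3, hd, hxd, hx⟩ := h
  have hdv : G.Adj d v := by
    by_contra hdv
    have := hB.not_bull d (c 3) v (c 1) (c 4)
    grind [G.adj_comm, hc.2, IsCenter]
  by_contra hvx
  have := hB.not_bull x d v (c 2) (c 0)
  grind [G.adj_comm, hc.2, IsCenter, IsAnticenter]

theorem not_isCenter (h : IsG7 G c d x) (hG : IsPrimeGraph G) (hB : BullFree G) :
    ¬ IsCenter G c v :=
  hG.not_isCenter hB h.cycle h.isAnticenter (fun _ ha => h.adj_of_isCenter hB ha) v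

theorem adj_iff_of_isClone (h : IsG7 G c d x) (hB : BullFree G) (hv : IsClone G c i v)
    (hiv : G.Adj (c i) v) : G.Adj d v ↔ G.Adj d (c i) := by
  have hxv := hB.not_adj_of_isClone h.cycle h.isAnticenter hv hiv
  obtain ⟨hc, hd0, hd3, hd, hxd, hx⟩ := h
  fin_cases i
  · have := hB.not_bull d (c 0) (c 1) (c 2) v
    grind [G.adj_comm, hc.2, IsClone]
  · have := hB.not_bull x d v (c 2) (c 0)
    grind [G.adj_comm, hc.2, IsClone, IsAnticenter]
  · have := hB.not_bull x d v (c 1) (c 3)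
    grind [G.adj_comm, hc.2, IsClone, IsAnticenter]
  · have := hB.not_bull d (c 3) (c 2) (c 1) v
    grind [G.adj_comm, hc.2, IsClone]
  · have := hB.not_bull x d (c 0) (c 1) v
    grind [G.adj_comm, hc.2, IsClone, IsAnticenter]

theorem update (h : IsG7 G c d x) (hB : BullFree G) (hv : IsClone G c i v)
    (hiv : G.Adj (c i) v) : IsG7 G (Function.update c i v) d x := by
  have hd (j : Fin 5) : G.Adj d (Function.update c i v j) ↔ G.Adj d (c j) := by
    by_cases hj : j = i
    · subst hj
      simpa using h.adj_iff_of_isClone hB hv hiv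
    · simp [hj]
  have hx (j : Fin 5) : ¬ G.Adj x (Function.update c i v j) := by
    by_cases hj : j = i
    · subst hj
      simpa using hB.not_adj_of_isClone h.cycle h.isAnticenter hv hiv
    · simpa [hj] using h.isAnticenter j
  exact ⟨hv.isInducedC5_update h.cycle, (hd 0).2 h.adj_zero, (hd 3).2 h.adj_three,
    fun j hj0 hj3 => (hd j).not.2 (h.not_adj j hj0 hj3), h.adj, hx⟩

theorem not_adj_of_isClone_add_two (h : IsG7 G c d x) (hB : BullFree G) (ht : IsClone G c i t)
    (hit : G.Adj (c i) t) (hy : IsClone G c (i + 2) y) (hiy : G.Adj (c (i + 2)) y) :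
    ¬ G.Adj y t := by
  intro hyt
  have hdt := h.adj_iff_of_isClone hB ht hit
  have hdy := h.adj_iff_of_isClone hB hy hiy
  have hxt := hB.not_adj_of_isClone h.cycle h.isAnticenter ht hit
  have hxy := hB.not_adj_of_isClone h.cycle h.isAnticenter hy hiy
  obtain ⟨hc, hd0, hd3, hd, hxd, hx⟩ := h
  fin_cases i
  · have := hB.not_bull y t d x (c 0)
    grind [G.adj_comm, hc.2, IsClone, IsAnticenter]
  · have := hB.not_bull t y d x (c 3)
    grind [G.adj_comm, hc.2, IsClone, IsAnticenter]
  · have := hB.not_bull d (c 3) t (c 1) y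
    grind [G.adj_comm, hc.2, IsClone]
  · have := hB.not_bull x d t (c 2) y
    grind [G.adj_comm, hc.2, IsClone, IsAnticenter]
  · have := hB.not_bull d (c 0) y (c 2) t
    grind [G.adj_comm, hc.2, IsClone]

theorem isClone_of_distinguisher (h : IsG7 G c d x) (hG : IsPrimeGraph G) (hB : BullFree G)
    (ht : IsClone G c i t) (hit : G.Adj (c i) t) (hyt : G.Adj y t) (hyi : ¬ G.Adj y (c i)) :
    IsClone G c i y := by
  have hy := (h.update hB ht hit).not_isCenter hG hB (v := y)
  obtain hy | ⟨hy, hiy⟩ | ⟨hy, hiy⟩ := hB.isClone_or_of_distinguisher h.cycle ht hit hyt hyi hy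
  · exact hy
  · exact absurd hyt (h.not_adj_of_isClone_add_two hB ht hit hy hiy)
  · have hi : i = i + 3 + 2 := by grind
    rw [hi] at ht hit
    exact absurd hyt.symm (h.not_adj_of_isClone_add_two hB hy hiy ht hit)

theorem not_adj_of_isClone (h : IsG7 G c d x) (hG : IsPrimeGraph G) (hB : BullFree G)
    (hv : IsClone G c i v) : ¬ G.Adj (c i) v := by
  intro hiv
  have hx : x ∉ {w | IsClone G c i w} := fun hx =>
    h.isAnticenter (i + 1) ((hx (i + 1) (by simp)).2 (h.cycle.adj_add_one i))
  have hstep (s : V) (hs : IsClone G c i s) (t : V) (ht : IsClone G c i t) (hst : G.Adj s t)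
      (hsG : IsG7 G (Function.update c i s) d x) : IsG7 G (Function.update c i t) d x := by
    simpa using hsG.update hB (hs.isClone_update_iff.2 ht) (by simpa using hst)
  obtain ⟨s, hs, t, ht, y, hy, hsG, -, hst, hyt, hys⟩ :=
    hG.exists_distinguisher (A := {w | IsClone G c i w})
      (P := fun w => IsG7 G (Function.update c i w) d x)
      ((Set.ne_univ_iff_exists_notMem _).2 ⟨x, hx⟩) (fun _ _ => Iff.rfl) hv hiv
      (by simpa using h) hstep
  exact hy (hs.isClone_update_iff.1 (hsG.isClone_of_distinguisher hG hB
    (hs.isClone_update_iff.2 ht) (by simpa using hst) hyt (by simpa using hys)))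

end IsG7

theorem BullFree.adj_or_adj_of_adj_edge (hB : BullFree G) (hc : IsInducedC5 G c)
    (hi : G.Adj v (c i)) (hi' : G.Adj v (c (i + 1))) :
    G.Adj v (c (i + 4)) ∨ G.Adj v (c (i + 2)) := by
  have := hB.not_bull (c (i + 4)) (c i) (c (i + 1)) (c (i + 2)) v
  grind [G.adj_comm, hc.2]

end Clone

theorem exists_eq_of_card_eq_three : ∀ S : Finset (Fin 5), S.card = 3 →
    (∀ i ∈ S, i + 1 ∈ S → i + 4 ∈ S ∨ i + 2 ∈ S) → ∃ i, S = {i, i + 1, i + 4} := by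
  decide

section Count

variable [DecidableRel G.Adj] {d x : V}

theorem nbrCount_le_five (v : V) : nbrCount G c v ≤ 5 := Finset.card_filter_le _ _

theorem isCenter_of_nbrCount_eq_five {v : V} (hv : nbrCount G c v = 5) : IsCenter G c v := by
  have := (Finset.card_eq_iff_eq_univ _).1 hv
  simpa [IsCenter, Finset.filter_eq_self] using this

theorem BullFree.exists_isClone_of_nbrCount_eq_three (hB : BullFree G) (hc : IsInducedC5 G c)
    {v : V} (hv : nbrCount G c v = 3) : ∃ i, IsClone G c i v ∧ G.Adj (c i) v := by
  obtain ⟨i, hi⟩ := exists_eq_of_card_eq_three _ hv fun i hi hi' => by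
    simpa using hB.adj_or_adj_of_adj_edge hc (by simpa using hi) (by simpa using hi')
  have hadj (j : Fin 5) : G.Adj v (c j) ↔ j = i ∨ j = i + 1 ∨ j = i + 4 := by
    simpa using Finset.ext_iff.1 hi j
  refine ⟨i, fun j hj => ?_, ((hadj i).2 (.inl rfl)).symm⟩
  rw [hadj, hc.2]
  grind

theorem stmt19_general (hB : BullFree G) (hPr : IsPrimeGraph G) (h : IsG7 G c d x) (v : V) :
    nbrCount G c v = 4 ∨ nbrCount G c v = 2 ∨ nbrCount G c v ≤ 1 := by
  have hle : nbrCount G c v ≤ 5 := nbrCount_le_five v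
  have h5 : nbrCount G c v ≠ 5 := fun hv =>
    h.not_isCenter hPr hB (isCenter_of_nbrCount_eq_five hv)
  have h3 : nbrCount G c v ≠ 3 := fun hv =>
    have ⟨_, hvi, hiv⟩ := hB.exists_isClone_of_nbrCount_eq_three h.cycle hv
    h.not_adj_of_isClone hPr hB hvi hiv
  omega

end Count

theorem stmt19 (G : SimpleGraph V) [DecidableRel G.Adj]
    (hP : P6Free G) (hB : BullFree G) (hPr : IsPrimeGraph G)
    (c : Fin 5 → V) (hc : IsInducedC5 G c)
    (d : V) (hd : d ∉ Set.range c)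
    (hd0 : G.Adj d (c 0)) (hd3 : G.Adj d (c 3))
    (hdno : ∀ i : Fin 5, i ≠ 0 → i ≠ 3 → ¬ G.Adj d (c i))
    (x : V) (hx : x ∉ Set.range c) (hxd : G.Adj x d) (hxne : x ≠ d)
    (hx0 : ∀ i : Fin 5, ¬ G.Adj x (c i)) :
    ∀ v : V, v ∉ Set.range c →
      nbrCount G c v = 4 ∨ nbrCount G c v = 2 ∨ nbrCount G c v ≤ 1 :=
  fun v _ => stmt19_general hB hPr ⟨hc, hd0, hd3, hdno, hxd, hx0⟩ v
end
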